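/- For every α ∈ (0,1), every nonuniform time mesh, and all indices k ≥ 2 and 1 ≤ j ≤ k−1, the L2-1_σ coefficient c_j^k is strictly positive: c_j^k > 0. -/

import Mathlib

open MeasureTheory Real Finset

noncomputable section

/-- Time step `τ_j = t_j - t_{j-1}`. -/
def tau (t : ℕ → ℝ) (j : ℕ) : ℝ := t j - t (j - 1)

/-- Step ratio `ρ_j = τ_j / τ_{j-1}`. -/
def rho (t : ℕ → ℝ) (j : ℕ) : ℝ := tau t j / tau t (j - 1)

/-- Offset node `t_k^* = t_{k-1} + σ τ_k` with `σ = 1 - α/2`. -/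
def tstar (α : ℝ) (t : ℕ → ℝ) (k : ℕ) : ℝ := t (k - 1) + (1 - α / 2) * tau t k

/-- L2-1_σ coefficient `a_j^k`. -/
def acoef (α : ℝ) (t : ℕ → ℝ) (j k : ℕ) : ℝ :=
  ∫ θ in (0:ℝ)..1,
    (-2 * tau t j * (1 - θ) - tau t (j + 1)) /
      ((tau t j + tau t (j + 1)) * (tstar α t k - (t (j - 1) + θ * tau t j)) ^ α)

/-- L2-1_σ coefficient `c_j^k`. -/
def ccoef (α : ℝ) (t : ℕ → ℝ) (j k : ℕ) : ℝ :=
  ∫ θ in (0:ℝ)..1,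
    (tau t j ^ 2 * (2 * θ - 1)) /
      (tau t (j + 1) * (tau t j + tau t (j + 1)) *
        (tstar α t k - (t (j - 1) + θ * tau t j)) ^ α)

/-- `d_j^k = c_{j-1}^k - a_j^k`. -/
def dcoef (α : ℝ) (t : ℕ → ℝ) (j k : ℕ) : ℝ := ccoef α t (j - 1) k - acoef α t j k

/-- The lower-triangular L2-1_σ matrix `M` (entries vanish above the diagonal and
for column index `0`). -/
def Mentry (α : ℝ) (t : ℕ → ℝ) (k j : ℕ) : ℝ :=
  if j = 0 ∨ k < j then 0
  else if j = k then ccoef α t (k - 1) k + (1 - α / 2) ^ (1 - α) / ((1 - α) * tau t k ^ α)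
  else if j = 1 then -acoef α t 1 k
  else dcoef α t j k

end

/-!
The weight `2θ - 1` has mean zero on `[0, 1]`, and the kernel `(t_k^* - (t_{j-1} + θ τ_j))^(-α)`
is strictly increasing in `θ`, because `t_k^*` lies to the right of the cell `[t_{j-1}, t_j]`.
Chebyshev's integral inequality for two strictly increasing functions says that the mean of their
product exceeds the product of their means, which is zero here. The inequality itself comes from
integrating `0 < (f x - f y) * (g x - g y)` first in `x` and then in `y`.
-/

theorem sub_mul_sub_pos_of_strictMonoOn {ι R : Type*} [LinearOrder ι] [Ring R] [LinearOrder R]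
    [IsStrictOrderedRing R] {f g : ι → R} {s : Set ι} (hf : StrictMonoOn f s)
    (hg : StrictMonoOn g s) {x y : ι} (hx : x ∈ s) (hy : y ∈ s) (hxy : x ≠ y) :
    0 < (f x - f y) * (g x - g y) := by
  rcases hxy.lt_or_gt with h | h
  · exact mul_pos_of_neg_of_neg (sub_neg.2 (hf hx hy h)) (sub_neg.2 (hg hx hy h))
  · exact mul_pos (sub_pos.2 (hf hy hx h)) (sub_pos.2 (hg hy hx h))

section Chebyshev

variable {Ω : Type*} [MeasurableSpace Ω] {μ : Measure Ω} {f g : Ω → ℝ}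

theorem integral_pos_of_ae_pos [NeZero μ] (hf : Integrable f μ) (hpos : ∀ᵐ x ∂μ, 0 < f x) :
    0 < ∫ x, f x ∂μ := by
  rw [integral_pos_iff_support_of_nonneg_ae (hpos.mono fun _ => le_of_lt) hf]
  have hsupp : Function.support f =ᵐ[μ] Set.univ :=
    Filter.eventuallyEq_univ.2 (hpos.mono fun _ => ne_of_gt)
  rw [measure_congr hsupp]
  exact NeZero.pos _

theorem integrable_sub_mul_sub [IsFiniteMeasure μ] (hf : Integrable f μ) (hg : Integrable g μ)
    (hfg : Integrable (fun x => f x * g x) μ) (c d : ℝ) :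
    Integrable (fun x => (f x - c) * (g x - d)) μ := by
  simp only [sub_mul, mul_sub]
  fun_prop

theorem integral_sub_mul_sub [IsFiniteMeasure μ] (hf : Integrable f μ) (hg : Integrable g μ)
    (hfg : Integrable (fun x => f x * g x) μ) (c d : ℝ) :
    ∫ x, (f x - c) * (g x - d) ∂μ =
      ∫ x, f x * g x ∂μ - (∫ x, f x ∂μ) * d - (c * ∫ x, g x ∂μ - μ.real Set.univ * (c * d)) := by
  simp only [sub_mul, mul_sub]
  rw [integral_sub (by fun_prop) (by fun_prop), integral_sub (by fun_prop) (by fun_prop),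
    integral_sub (by fun_prop) (by fun_prop), integral_mul_const, integral_const_mul,
    integral_const, smul_eq_mul]
  ring

theorem integral_mul_integral_lt_of_ae_sub_mul_sub_pos [IsFiniteMeasure μ] [NeZero μ]
    (hf : Integrable f μ) (hg : Integrable g μ) (hfg : Integrable (fun x => f x * g x) μ)
    (hpos : ∀ᵐ y ∂μ, ∀ᵐ x ∂μ, 0 < (f x - f y) * (g x - g y)) :
    (∫ x, f x ∂μ) * ∫ x, g x ∂μ < μ.real Set.univ * ∫ x, f x * g x ∂μ := by
  set F := ∫ x, f x ∂μ
  set G := ∫ x, g x ∂μ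
  set P := ∫ x, f x * g x ∂μ
  set m := μ.real Set.univ
  have inner_pos : ∀ᵐ y ∂μ, 0 < P - F * g y - (f y * G - m * (f y * g y)) := by
    filter_upwards [hpos] with y hy
    rw [← integral_sub_mul_sub hf hg hfg]
    exact integral_pos_of_ae_pos (integrable_sub_mul_sub hf hg hfg _ _) hy
  have outer_pos : 0 < ∫ y, P - F * g y - (f y * G - m * (f y * g y)) ∂μ :=
    integral_pos_of_ae_pos (by fun_prop) inner_pos
  have outer_eq : ∫ y, P - F * g y - (f y * G - m * (f y * g y)) ∂μ =
      m * P - F * G - (F * G - m * P) := by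
    rw [integral_sub (by fun_prop) (by fun_prop), integral_sub (by fun_prop) (by fun_prop),
      integral_sub (by fun_prop) (by fun_prop), integral_const, integral_const_mul,
      integral_mul_const, integral_const_mul, smul_eq_mul]
  linarith

end Chebyshev

section Interval

variable {f g : ℝ → ℝ} {a b : ℝ}

theorem intervalIntegrable_mul_of_monotoneOn {μ : Measure ℝ} [IsLocallyFiniteMeasure μ]
    (hf : IntervalIntegrable f μ a b) (hg : MonotoneOn g (Set.uIcc a b)) :
    IntervalIntegrable (fun x => f x * g x) μ a b := by
  have hg_bound : ∀ x ∈ Set.uIcc a b, ‖g x‖ ≤ max |g (min a b)| |g (max a b)| := fun x hx =>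
    abs_le_max_abs_abs (hg ⟨le_rfl, min_le_max⟩ hx hx.1) (hg hx ⟨min_le_max, le_rfl⟩ hx.2)
  rw [intervalIntegrable_iff] at hf ⊢
  exact hf.mul_bdd hg.intervalIntegrable.def'.aestronglyMeasurable <|
    ae_restrict_of_forall_mem measurableSet_uIoc fun x hx => hg_bound x (Set.uIoc_subset_uIcc hx)

theorem intervalIntegral_mul_intervalIntegral_lt_of_strictMonoOn (hab : a < b)
    (hf : StrictMonoOn f (Set.Icc a b)) (hg : StrictMonoOn g (Set.Icc a b)) :
    (∫ x in a..b, f x) * ∫ x in a..b, g x < (b - a) * ∫ x in a..b, f x * g x := by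
  have huIcc : Set.uIcc a b = Set.Icc a b := Set.uIcc_of_le hab.le
  have hf_mono : MonotoneOn f (Set.uIcc a b) := huIcc ▸ hf.monotoneOn
  have hg_mono : MonotoneOn g (Set.uIcc a b) := huIcc ▸ hg.monotoneOn
  have hf_int : IntervalIntegrable f volume a b := hf_mono.intervalIntegrable
  have hfg_int := intervalIntegrable_mul_of_monotoneOn hf_int hg_mono
  have : NeZero (volume.restrict (Set.Ioc a b)) := ⟨by simpa using hab⟩
  have hpos : ∀ᵐ y ∂volume.restrict (Set.Ioc a b), ∀ᵐ x ∂volume.restrict (Set.Ioc a b),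
      0 < (f x - f y) * (g x - g y) := by
    refine ae_restrict_of_forall_mem measurableSet_Ioc fun y hy => ?_
    filter_upwards [ae_restrict_mem measurableSet_Ioc, Measure.ae_ne _ y] with x hx hxy
    exact sub_mul_sub_pos_of_strictMonoOn hf hg (Set.Ioc_subset_Icc_self hx)
      (Set.Ioc_subset_Icc_self hy) hxy
  have chebyshev := integral_mul_integral_lt_of_ae_sub_mul_sub_pos hf_int.1
    hg_mono.intervalIntegrable.1 hfg_int.1 hpos
  simpa only [intervalIntegral.integral_of_le hab.le, measureReal_restrict_apply_univ,
    Real.volume_real_Ioc_of_le hab.le] using chebyshev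

end Interval

theorem strictMonoOn_inv_rpow_sub {α : ℝ} (hα : 0 < α) (s : ℝ) :
    StrictMonoOn (fun x => ((s - x) ^ α)⁻¹) (Set.Iio s) := fun _ _ _ hy hxy =>
  inv_strictAnti₀ (rpow_pos_of_pos (sub_pos.2 hy) α)
    (rpow_lt_rpow (sub_pos.2 hy).le (sub_lt_sub_left hxy s) hα)

theorem strictMonoOn_inv_rpow_sub_add_mul {α r s τ : ℝ} (hα : 0 < α) (hτ : 0 < τ)
    (hs : r + τ < s) :
    StrictMonoOn (fun θ => ((s - (r + θ * τ)) ^ α)⁻¹) (Set.Icc 0 1) := by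
  have hmono : StrictMono fun θ => r + θ * τ := (strictMono_mul_right_of_pos hτ).const_add r
  refine (strictMonoOn_inv_rpow_sub hα s).comp (hmono.strictMonoOn _) fun θ hθ => ?_
  have hθτ : θ * τ ≤ τ := mul_le_of_le_one_left hτ.le hθ.2
  exact Set.mem_Iio.2 (by linarith)

theorem integral_two_mul_sub_one : ∫ θ in (0 : ℝ)..1, (2 * θ - 1) = 0 := by
  rw [intervalIntegral.integral_sub (Continuous.intervalIntegrable (by fun_prop) _ _) (by simp),
    intervalIntegral.integral_const_mul, integral_id, intervalIntegral.integral_const]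
  norm_num

theorem integral_two_mul_sub_one_mul_pos {g : ℝ → ℝ} (hg : StrictMonoOn g (Set.Icc 0 1)) :
    0 < ∫ θ in (0 : ℝ)..1, (2 * θ - 1) * g θ := by
  have hweight : StrictMonoOn (fun θ : ℝ => 2 * θ - 1) (Set.Icc 0 1) :=
    fun _ _ _ _ h => by dsimp only; linarith
  simpa [integral_two_mul_sub_one] using
    intervalIntegral_mul_intervalIntegral_lt_of_strictMonoOn one_pos hweight hg

section Mesh

variable {α : ℝ} {t : ℕ → ℝ} {j k : ℕ}

theorem tau_pos (ht : StrictMono t) (hj : 1 ≤ j) : 0 < tau t j :=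
  sub_pos.2 (ht (Nat.sub_lt hj one_pos))

theorem lt_tstar (hα : α < 2) (ht : StrictMono t) (hjk : j < k) : t j < tstar α t k := by
  have hstep : 0 < (1 - α / 2) * tau t k := mul_pos (by linarith) (tau_pos ht (by omega))
  calc
    t j ≤ t (k - 1) := ht.monotone (by omega)
    _ < tstar α t k := lt_add_of_pos_right _ hstep

theorem ccoef_eq_mul_integral (α : ℝ) (t : ℕ → ℝ) (j k : ℕ) :
    ccoef α t j k = tau t j ^ 2 / (tau t (j + 1) * (tau t j + tau t (j + 1))) *
      ∫ θ in (0 : ℝ)..1, (2 * θ - 1) * ((tstar α t k - (t (j - 1) + θ * tau t j)) ^ α)⁻¹ := by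
  simp only [ccoef, mul_div_mul_comm, intervalIntegral.integral_const_mul, ← div_eq_mul_inv]

theorem ccoef_pos_of_lt_tstar (hα : 0 < α) (hτ : 0 < tau t j) (hτ' : 0 < tau t (j + 1))
    (hs : t j < tstar α t k) : 0 < ccoef α t j k := by
  have hcell : t (j - 1) + tau t j < tstar α t k := (add_sub_cancel _ _).trans_lt hs
  rw [ccoef_eq_mul_integral]
  exact mul_pos (by positivity)
    (integral_two_mul_sub_one_mul_pos (strictMonoOn_inv_rpow_sub_add_mul hα hτ hcell))

end Mesh

theorem ccoef_pos_general {α : ℝ} (hα : α ∈ Set.Ioo (0 : ℝ) 2) {t : ℕ → ℝ} (ht : StrictMono t)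
    {j k : ℕ} (hj : 1 ≤ j) (hjk : j < k) : 0 < ccoef α t j k :=
  ccoef_pos_of_lt_tstar hα.1 (tau_pos ht hj) (tau_pos ht (by omega)) (lt_tstar hα.2 ht hjk)

/-- (P5): `c_j^k > 0` for `k ≥ 2`, `1 ≤ j ≤ k-1`. -/
theorem ccoef_pos (α : ℝ) (hα : α ∈ Set.Ioo (0:ℝ) 1)
    (t : ℕ → ℝ) (ht0 : t 0 = 0) (hmono : StrictMono t)
    (k j : ℕ) (hk : 2 ≤ k) (hj1 : 1 ≤ j) (hj2 : j ≤ k - 1) :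
    ccoef α t j k > 0 := by
  exact ccoef_pos_general ⟨hα.1, hα.2.trans one_lt_two⟩ hmono hj1 (by omega)
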